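/- arXiv:1511.09280 — 2 statements merged into one kernel-verified Lean document; each statement's English description precedes it below -/
import Mathlib

section
/- Let X be a Cantor space and K a dynamical simplex on X. Then for every continuous function f : X → [0,1] and every ε > 0 there exists a clopen set B ⊆ X such that |∫_X f dμ − μ(B)| ≤ ε for every μ ∈ K; that is, every affine function on K of the form μ ↦ ∫_X f dμ with f ∈ C(X,[0,1]) can be uniformly approximated on K by functions of the form μ ↦ μ(B) with B clopen. -/
/-!
A continuous function on a profinite space is uniformly close to a step function on a finite clopen
partition, so it suffices to find, for `c ∈ [0, 1]` and inside each clopen `A`, a clopen set whose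
measure is uniformly close to `c * μ A`. The set of all `c` for which this is possible is closed in
`ℝ` and stable under products (take a part of a part) and under `c ↦ 1 - c` (take the complement in
`A`), and approximate divisibility puts every `1 / n` into it. Hence it contains all products of
numbers of the form `1 - 1 / n`, so every rational number of `[0, 1]`, and finally all of `[0, 1]`.
-/

open MeasureTheory

namespace DynSimplex

variable {X : Type*} [TopologicalSpace X] [MeasurableSpace X] [OpensMeasurableSpace X]

/-- `g` preserves the probability measure `μ`, i.e. `g_*μ = μ`. -/
def Preserves (g : X ≃ₜ X) (μ : ProbabilityMeasure X) : Prop :=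
  (μ : Measure X).map g = (μ : Measure X)

/-- A homeomorphism is minimal if all of its (two-sided) orbits are dense. -/
def IsMinimal (g : X ≃ₜ X) : Prop :=
  ∀ x : X, Dense (Set.range fun n : ℤ => (g.toEquiv ^ n) x)

/-- A set of probability measures is good if for all clopen `A`, `B` with `μ A < μ B` for
all `μ ∈ K`, there is a clopen `C ⊆ B` with `μ C = μ A` for all `μ ∈ K`. -/
def Good (K : Set (ProbabilityMeasure X)) : Prop :=
  ∀ A B : Set X, IsClopen A → IsClopen B → (∀ μ ∈ K, μ A < μ B) →
    ∃ C : Set X, IsClopen C ∧ C ⊆ B ∧ ∀ μ ∈ K, μ C = μ A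

/-- Approximate divisibility of a set of probability measures. -/
def ApproximatelyDivisible (K : Set (ProbabilityMeasure X)) : Prop :=
  ∀ A : Set X, IsClopen A → ∀ n : ℕ, 1 ≤ n → ∀ ε : ℝ, 0 < ε →
    ∃ B : Set X, IsClopen B ∧ B ⊆ A ∧
      ∀ μ ∈ K, (μ A : ℝ) - ε ≤ (n : ℝ) * (μ B : ℝ) ∧ (n : ℝ) * (μ B : ℝ) ≤ (μ A : ℝ)

/-- A probability measure has full support if every nonempty open set has positive measure. -/
def FullSupport (μ : ProbabilityMeasure X) : Prop :=
  ∀ U : Set X, IsOpen U → U.Nonempty → 0 < μ U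

/-- A probability measure is atomless if all singletons are null. -/
def Atomless (μ : ProbabilityMeasure X) : Prop :=
  ∀ x : X, μ {x} = 0

/-- Convexity of a set of probability measures (as a subset of the `ℝ≥0`-module of
finite measures). -/
def ProbConvex (K : Set (ProbabilityMeasure X)) : Prop :=
  Convex NNReal (ProbabilityMeasure.toFiniteMeasure '' K)

/-- The set of extreme points of a set of probability measures. -/
def ProbExtremePoints (K : Set (ProbabilityMeasure X)) : Set (ProbabilityMeasure X) :=
  ProbabilityMeasure.toFiniteMeasure ⁻¹'
    (Set.extremePoints NNReal (ProbabilityMeasure.toFiniteMeasure '' K))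

/-- A dynamical simplex: a nonempty compact convex set of atomless, fully supported
probability measures which is good and approximately divisible. -/
def DynamicalSimplex (K : Set (ProbabilityMeasure X)) : Prop :=
  K.Nonempty ∧ IsCompact K ∧ ProbConvex K ∧
    (∀ μ ∈ K, Atomless μ ∧ FullSupport μ) ∧ Good K ∧ ApproximatelyDivisible K

/-- Membership in the full group of `g`. -/
def InFullGroup (g h : X ≃ₜ X) : Prop :=
  ∀ x : X, ∃ n : ℤ, h x = (g.toEquiv ^ n) x

/-- Membership in the topological full group of `g`: `h` is given piecewise by powers of `g`
on a finite clopen partition of `X`. -/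
def InTopologicalFullGroup (g h : X ≃ₜ X) : Prop :=
  ∃ (k : ℕ) (A : Fin k → Set X) (n : Fin k → ℤ),
    (∀ i, IsClopen (A i)) ∧ (∀ x : X, ∃! i, x ∈ A i) ∧
    ∀ i, ∀ x ∈ A i, h x = (g.toEquiv ^ (n i)) x

/-- `g` preserves every measure in `K` (i.e. `g` belongs to the group `G`). -/
def PreservesAll (K : Set (ProbabilityMeasure X)) (g : X ≃ₜ X) : Prop :=
  ∀ μ ∈ K, Preserves g μ

/-- `g` is `K`-saturated: any two `K`-equivalent clopen sets are mapped one to the other by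
an element of the topological full group of `g`. -/
def KSaturated (K : Set (ProbabilityMeasure X)) (g : X ≃ₜ X) : Prop :=
  ∀ U V : Set X, IsClopen U → IsClopen V → (∀ μ ∈ K, μ U = μ V) →
    ∃ h : X ≃ₜ X, InTopologicalFullGroup g h ∧ h '' U = V

/-- The topology of uniform convergence on the homeomorphism group of a compact space
(the compact-open topology, induced from `C(X, X)`). -/
instance : TopologicalSpace (X ≃ₜ X) :=
  TopologicalSpace.induced (fun h : X ≃ₜ X => (h : C(X, X))) inferInstance

/-- A KR-partition for `K`: a finite family of columns, each column being a finite sequence of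
clopen sets which are all `K`-equivalent, the atoms of all columns forming a partition of `X`. -/
structure KRPartition (X : Type*) [TopologicalSpace X] [MeasurableSpace X]
    (K : Set (ProbabilityMeasure X)) where
  numCols : ℕ
  height : Fin numCols → ℕ
  atom : (i : Fin numCols) → Fin (height i + 1) → Set X
  clopen : ∀ i j, IsClopen (atom i j)
  equivK : ∀ i j j', ∀ μ ∈ K, μ (atom i j) = μ (atom i j')
  partition : ∀ x : X, ∃! p : (i : Fin numCols) × Fin (height i + 1), x ∈ atom p.1 p.2

/-- The base of a KR-partition: the union of the first atoms of the columns. -/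
def KRPartition.base {K : Set (ProbabilityMeasure X)} (T : KRPartition X K) : Set X :=
  ⋃ i, T.atom i 0

/-- The top of a KR-partition: the union of the last atoms of the columns. -/
def KRPartition.top {K : Set (ProbabilityMeasure X)} (T : KRPartition X K) : Set X :=
  ⋃ i, T.atom i (Fin.last _)

/-- `S` refines `T`: the base (resp. top) of `S` is contained in the base (resp. top) of `T`,
and every column of `S` is obtained by cutting and stacking columns of `T`. -/
def KRPartition.Refines {K : Set (ProbabilityMeasure X)} (S T : KRPartition X K) : Prop :=
  S.base ⊆ T.base ∧ S.top ⊆ T.top ∧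
  ∀ c : Fin S.numCols, ∃ (m : ℕ) (idx : Fin (m + 1) → Fin T.numCols)
    (piece : (k : Fin (m + 1)) → Fin (T.height (idx k) + 1) → Set X),
    (∀ k j, piece k j ⊆ T.atom (idx k) j) ∧
    (S.height c + 1 = ∑ k : Fin (m + 1), (T.height (idx k) + 1)) ∧
    ∀ (k : Fin (m + 1)) (j : Fin (T.height (idx k) + 1))
      (hlt : (∑ l ∈ Finset.Iio k, (T.height (idx l) + 1)) + (j : ℕ) < S.height c + 1),
      S.atom c ⟨(∑ l ∈ Finset.Iio k, (T.height (idx l) + 1)) + (j : ℕ), hlt⟩ = piece k j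

/-- A KR-partition is compatible with a clopen set `U` if `U` is a union of its atoms,
equivalently every atom is either contained in `U` or disjoint from it. -/
def KRPartition.Compatible {K : Set (ProbabilityMeasure X)} (S : KRPartition X K)
    (U : Set X) : Prop :=
  ∀ i j, S.atom i j ⊆ U ∨ Disjoint (S.atom i j) U

end DynSimplex


namespace DynSimplex

theorem integral_comp_eq_sum_fiber {α ι E : Type*} [MeasurableSpace α] [Fintype ι]
    [NormedAddCommGroup E] [NormedSpace ℝ E] [CompleteSpace E] (μ : Measure α)
    [IsFiniteMeasure μ] {g : α → ι} (hg : ∀ i, MeasurableSet (g ⁻¹' {i})) (h : ι → E) :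
    ∫ x, h (g x) ∂μ = ∑ i, μ.real (g ⁻¹' {i}) • h i := by
  let _ : MeasurableSpace ι := ⊤
  have hgm : Measurable g := measurable_to_countable' hg
  calc ∫ x, h (g x) ∂μ
      = ∫ i, h i ∂(μ.map g) := (integral_map hgm.aemeasurable .of_discrete).symm
    _ = ∑ i, (μ.map g).real {i} • h i := integral_fintype .of_finite
    _ = ∑ i, μ.real (g ⁻¹' {i}) • h i := by simp [map_measureReal_apply hgm]

theorem dist_integral_le_of_ae_dist_le {α E : Type*} [MeasurableSpace α]
    [NormedAddCommGroup E] [NormedSpace ℝ E] {μ : Measure α} [IsFiniteMeasure μ]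
    {f g : α → E} (hf : Integrable f μ) (hg : Integrable g μ) {C : ℝ}
    (hfg : ∀ᵐ x ∂μ, dist (f x) (g x) ≤ C) :
    dist (∫ x, f x ∂μ) (∫ x, g x ∂μ) ≤ C * μ.real Set.univ := by
  simp only [dist_eq_norm] at hfg ⊢
  rw [← integral_sub hf hg]
  exact norm_integral_le_of_norm_le_const hfg

theorem exists_continuous_fin_dist_lt {X V : Type*} [TopologicalSpace X] [CompactSpace X]
    [T2Space X] [TotallyDisconnectedSpace X] [PseudoMetricSpace V] {s : Set V} {f : X → V}
    (hf : Continuous f) (hfs : ∀ x, f x ∈ s) {ε : ℝ} (hε : 0 < ε) :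
    ∃ (n : ℕ) (g : X → Fin n) (h : Fin n → V),
      Continuous g ∧ (∀ i, h i ∈ s) ∧ ∀ x, dist (f x) (h (g x)) < ε := by
  obtain ⟨n, g, h, hg, hfgh⟩ := ContinuousMap.exists_finite_approximation_of_mem_nhds_diagonal
    (⟨fun x => ⟨f x, hfs x⟩, hf.subtype_mk hfs⟩ : C(X, s))
    (nhdsSet_diagonal_le_uniformity (Metric.dist_mem_uniformity hε))
  exact ⟨n, g, fun i => h i, hg, fun i => (h i).2, hfgh⟩

/-- A real number `c` is an approximate proportion for `K` if every clopen set `A` contains clopen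
sets whose measure is, uniformly on `K`, arbitrarily close to `c * μ A`. Approximate divisibility
says that the numbers `1 / n` have this property, with the measure bounded above by `μ A / n`. -/
def ApproxProportion {X : Type*} [TopologicalSpace X] [MeasurableSpace X]
    (K : Set (ProbabilityMeasure X)) (c : ℝ) : Prop :=
  ∀ A : Set X, IsClopen A → ∀ ε : ℝ, 0 < ε →
    ∃ B : Set X, IsClopen B ∧ B ⊆ A ∧ ∀ μ ∈ K, |c * (μ A : ℝ) - (μ B : ℝ)| ≤ ε

section Proportion

variable {X : Type*} [TopologicalSpace X] [MeasurableSpace X] {K : Set (ProbabilityMeasure X)}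
  {c d : ℝ}

theorem ApproxProportion.one : ApproxProportion K 1 := fun A hA ε hε =>
  ⟨A, hA, subset_rfl, fun μ _ => by simpa using hε.le⟩

theorem ApproxProportion.zero : ApproxProportion K 0 := fun _ _ ε hε =>
  ⟨∅, isClopen_empty, Set.empty_subset _, fun μ _ => by simpa using hε.le⟩

theorem ApproxProportion.one_sub [OpensMeasurableSpace X] (hc : ApproxProportion K c) :
    ApproxProportion K (1 - c) := by
  intro A hA ε hε
  obtain ⟨B, hB, hBA, hBμ⟩ := hc A hA ε hε
  refine ⟨A \ B, hA.diff hB, Set.sdiff_subset, fun μ hμ => ?_⟩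
  have hdiff : (μ (A \ B) : ℝ) = μ A - μ B := by
    simpa using measureReal_sdiff (μ := (μ : Measure X)) hBA hB.isOpen.measurableSet
  calc |(1 - c) * (μ A : ℝ) - μ (A \ B)|
      = |c * (μ A : ℝ) - μ B| := by rw [hdiff, ← abs_neg]; ring_nf
    _ ≤ ε := hBμ μ hμ

theorem ApproxProportion.mul (hc : ApproxProportion K c) (hd : ApproxProportion K d) :
    ApproxProportion K (c * d) := by
  intro A hA ε hε
  obtain ⟨δ, hδ, hdδ⟩ := exists_pos_mul_lt (half_pos hε) |d|
  obtain ⟨B, hB, hBA, hBμ⟩ := hc A hA δ hδ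
  obtain ⟨C, hC, hCB, hCμ⟩ := hd B hB (ε / 2) (half_pos hε)
  refine ⟨C, hC, hCB.trans hBA, fun μ hμ => ?_⟩
  calc |c * d * (μ A : ℝ) - μ C|
      = |d * (c * (μ A : ℝ) - μ B) + (d * (μ B : ℝ) - μ C)| := by ring_nf
    _ ≤ |d| * |c * (μ A : ℝ) - μ B| + |d * (μ B : ℝ) - μ C| :=
        (abs_add_le _ _).trans_eq (by rw [abs_mul])
    _ ≤ |d| * δ + ε / 2 := by gcongr; exacts [hBμ μ hμ, hCμ μ hμ]
    _ ≤ ε := by linarith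

theorem isClosed_setOf_approxProportion (K : Set (ProbabilityMeasure X)) :
    IsClosed {c : ℝ | ApproxProportion K c} := by
  refine isClosed_of_closure_subset fun c hc A hA ε hε => ?_
  obtain ⟨d, hd, hcd⟩ := Metric.mem_closure_iff.mp hc (ε / 2) (half_pos hε)
  obtain ⟨B, hB, hBA, hBμ⟩ := hd A hA (ε / 2) (half_pos hε)
  refine ⟨B, hB, hBA, fun μ hμ => ?_⟩
  have hA1 : (μ A : ℝ) ≤ 1 := mod_cast μ.apply_le_one A
  calc |c * (μ A : ℝ) - μ B|
      ≤ |c * (μ A : ℝ) - d * μ A| + |d * (μ A : ℝ) - μ B| := abs_sub_le _ _ _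
    _ ≤ ε / 2 * 1 + ε / 2 := by
        rw [← sub_mul, abs_mul, NNReal.abs_eq, ← Real.dist_eq]
        gcongr
        exact hBμ μ hμ
    _ = ε := by ring

theorem ApproximatelyDivisible.approxProportion_inv_natCast
    (hK : ApproximatelyDivisible K) {n : ℕ} (hn : 1 ≤ n) : ApproxProportion K (n : ℝ)⁻¹ := by
  intro A hA ε hε
  obtain ⟨B, hB, hBA, hBμ⟩ := hK A hA n hn ε hε
  refine ⟨B, hB, hBA, fun μ hμ => ?_⟩
  obtain ⟨hlower, hupper⟩ := hBμ μ hμ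
  have hn' : (1 : ℝ) ≤ n := mod_cast hn
  calc |(n : ℝ)⁻¹ * (μ A : ℝ) - μ B|
      = (n : ℝ)⁻¹ * |(μ A : ℝ) - n * μ B| := by
        rw [← inv_mul_cancel_left₀ (by positivity : (n : ℝ) ≠ 0) (μ B : ℝ), ← mul_sub, abs_mul,
          abs_of_nonneg (by positivity), mul_inv_cancel_left₀ (by positivity)]
    _ ≤ 1 * ε := by
        gcongr
        · exact inv_le_one_of_one_le₀ hn'
        · exact abs_le.mpr ⟨by linarith, by linarith⟩
    _ = ε := one_mul ε

variable [OpensMeasurableSpace X]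

-- `p / n` is the telescoping product of the `1 - 1 / j` for `p < j ≤ n`.
theorem ApproximatelyDivisible.approxProportion_natCast_div
    (hK : ApproximatelyDivisible K) {p n : ℕ} (hpn : p ≤ n) :
    ApproxProportion K ((p : ℝ) / n) := by
  rcases Nat.eq_zero_or_pos p with rfl | hp
  · simpa using ApproxProportion.zero
  induction n, hpn using Nat.le_induction with
  | base => simpa [hp.ne'] using ApproxProportion.one
  | succ n hpn ih =>
    have hn : (n : ℝ) ≠ 0 := mod_cast (hp.trans_le hpn).ne'
    convert ih.mul (hK.approxProportion_inv_natCast n.succ_pos).one_sub using 1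
    push_cast
    field_simp
    ring

theorem ApproximatelyDivisible.approxProportion (hK : ApproximatelyDivisible K)
    (hc : c ∈ Set.Icc (0 : ℝ) 1) : ApproxProportion K c := by
  have hfloor (n : ℕ) : ⌊c * n⌋₊ ≤ n :=
    Nat.floor_le_of_le (mul_le_of_le_one_left n.cast_nonneg hc.2)
  have htendsto : Filter.Tendsto (fun n : ℕ => (⌊c * n⌋₊ : ℝ) / n) Filter.atTop (nhds c) :=
    (tendsto_nat_floor_mul_div_atTop hc.1).comp tendsto_natCast_atTop_atTop
  exact (isClosed_setOf_approxProportion K).mem_of_tendsto htendsto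
    (.of_forall fun n => hK.approxProportion_natCast_div (hfloor n))

theorem ApproximatelyDivisible.exists_clopen_approx_integral_comp
    (hK : ApproximatelyDivisible K) {ι : Type*} [Finite ι] [TopologicalSpace ι]
    [DiscreteTopology ι] {g : X → ι} (hg : Continuous g) {h : ι → ℝ}
    (hh : ∀ i, h i ∈ Set.Icc (0 : ℝ) 1) {ε : ℝ} (hε : 0 < ε) :
    ∃ B : Set X, IsClopen B ∧
      ∀ μ ∈ K, |(∫ x, h (g x) ∂(μ : Measure X)) - (μ B : ℝ)| ≤ ε := by
  cases nonempty_fintype ι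
  obtain ⟨δ, hδ, hcardδ⟩ := exists_pos_mul_lt hε (Fintype.card ι)
  have hfiber (i : ι) : IsClopen (g ⁻¹' {i}) := (isClopen_discrete {i}).preimage hg
  choose B hB hBfiber hBμ using fun i => hK.approxProportion (hh i) _ (hfiber i) δ hδ
  have hBdisj : Pairwise (Function.onFun Disjoint B) := fun i j hij =>
    ((Set.disjoint_singleton.mpr hij).preimage g).mono (hBfiber i) (hBfiber j)
  refine ⟨⋃ i, B i, isClopen_iUnion_of_finite hB, fun μ hμ => ?_⟩
  have hunion : (μ (⋃ i, B i) : ℝ) = ∑ i, (μ (B i) : ℝ) := by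
    simpa using measureReal_iUnion_fintype (μ := (μ : Measure X)) hBdisj fun i =>
      (hB i).isOpen.measurableSet
  have hintegral : ∫ x, h (g x) ∂(μ : Measure X) = ∑ i, h i * (μ (g ⁻¹' {i}) : ℝ) := by
    simpa [mul_comm] using
      integral_comp_eq_sum_fiber (μ : Measure X) (fun i => (hfiber i).isOpen.measurableSet) h
  calc |(∫ x, h (g x) ∂(μ : Measure X)) - μ (⋃ i, B i)|
      = |∑ i, (h i * (μ (g ⁻¹' {i}) : ℝ) - μ (B i))| := by
        rw [hintegral, hunion, Finset.sum_sub_distrib]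
    _ ≤ ∑ _i : ι, δ :=
        (Finset.abs_sum_le_sum_abs _ _).trans (Finset.sum_le_sum fun i _ => hBμ i μ hμ)
    _ = Fintype.card ι * δ := by simp
    _ ≤ ε := hcardδ.le

end Proportion

end DynSimplex

theorem integral_approx_by_clopen_general
    {X : Type*} [TopologicalSpace X] [CompactSpace X] [T2Space X] [TotallyDisconnectedSpace X]
    [MeasurableSpace X] [OpensMeasurableSpace X]
    (K : Set (ProbabilityMeasure X)) (hK : DynSimplex.ApproximatelyDivisible K)
    (f : X → ℝ) (hf : Continuous f) (hf01 : ∀ x, f x ∈ Set.Icc (0 : ℝ) 1)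
    (ε : ℝ) (hε : 0 < ε) :
    ∃ B : Set X, IsClopen B ∧
      ∀ μ ∈ K, |(∫ x, f x ∂(μ : Measure X)) - (μ B : ℝ)| ≤ ε := by
  obtain ⟨n, g, h, hg, hh, hfgh⟩ :=
    DynSimplex.exists_continuous_fin_dist_lt hf hf01 (half_pos hε)
  obtain ⟨B, hB, hBμ⟩ := hK.exists_clopen_approx_integral_comp hg hh (half_pos hε)
  refine ⟨B, hB, fun μ hμ => ?_⟩
  have hf_int : Integrable f (μ : Measure X) :=
    hf.integrable_of_hasCompactSupport (.of_compactSpace f)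
  have hhg_int : Integrable (fun x => h (g x)) (μ : Measure X) :=
    Continuous.integrable_of_hasCompactSupport (by fun_prop) (.of_compactSpace _)
  have hdist : |(∫ x, f x ∂(μ : Measure X)) - ∫ x, h (g x) ∂(μ : Measure X)| ≤ ε / 2 := by
    simpa [Real.dist_eq] using DynSimplex.dist_integral_le_of_ae_dist_le hf_int hhg_int
      (.of_forall fun x => (hfgh x).le)
  calc |(∫ x, f x ∂(μ : Measure X)) - μ B|
      ≤ |(∫ x, f x ∂(μ : Measure X)) - ∫ x, h (g x) ∂(μ : Measure X)|
          + |(∫ x, h (g x) ∂(μ : Measure X)) - μ B| := abs_sub_le _ _ _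
    _ ≤ ε / 2 + ε / 2 := add_le_add hdist (hBμ μ hμ)
    _ = ε := add_halves ε

theorem integral_approx_by_clopen
    {X : Type*} [TopologicalSpace X] [CompactSpace X]
    [TopologicalSpace.MetrizableSpace X] [TotallyDisconnectedSpace X] [PerfectSpace X]
    [Nonempty X] [MeasurableSpace X] [BorelSpace X]
    (K : Set (MeasureTheory.ProbabilityMeasure X)) (hK : DynSimplex.DynamicalSimplex K)
    (f : X → ℝ) (hf : Continuous f) (hf01 : ∀ x, f x ∈ Set.Icc (0 : ℝ) 1)
    (ε : ℝ) (hε : 0 < ε) :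
    ∃ B : Set X, IsClopen B ∧
      ∀ μ ∈ K, |(∫ x, f x ∂(μ : MeasureTheory.Measure X)) - (μ B : ℝ)| ≤ ε :=
  have ⟨_, _, _, _, _, hdiv⟩ := hK
  integral_approx_by_clopen_general K hdiv f hf hf01 ε hε
end

section
/- Let X be a Cantor space and K a good nonempty set of Borel probability measures on X, each of which has full support. Let ν be a Borel probability measure on X such that h_*ν = ν for every homeomorphism h of X preserving every measure in K. If A is a clopen set and n ≥ 1 is an integer with μ(A) < 1/n for every μ ∈ K, then ν(A) ≤ 1/n. -/
/-!
Call two clopen sets `K`-equivalent if they have the same measure under every `μ ∈ K`.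
If `U` and `V` are `K`-equivalent, some homeomorphism preserving `K` maps `U` onto `V`: a
back-and-forth argument, in which goodness and full support extend finite matchings on either side,
gives a matching containing `(U, V)` in which every clopen set occurs on both sides. Listing the
first, respectively the second, components codes the points of `X` by two closed embeddings into a
Cantor cube. They have the same law under every `μ ∈ K`, hence the same image by full support, and
composing one with the inverse of the other is the required homeomorphism.

Therefore `ν` agrees on `K`-equivalent clopen sets. If `n * μ A < μ B` for all `μ ∈ K`, goodness
allows one to remove from `B` one `K`-equivalent copy of `A` after another, `n` times in all.
Hence `n * ν A ≤ ν B`, and the assertion is the case `B = X`.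
-/

open MeasureTheory

open MeasureTheory ProbabilityTheory Set TopologicalSpace Topology

namespace DynSimplex

section Measure

variable {X Y ι : Type*} [MeasurableSpace X] [MeasurableSpace Y] [MeasurableSpace ι]

lemma coe_measure_eq_iff {μ : ProbabilityMeasure X} {A B : Set X} :
    (μ : Measure X) A = (μ : Measure X) B ↔ μ A = μ B := by
  simp only [← ProbabilityMeasure.ennreal_coeFn_eq_coeFn_toMeasure, ENNReal.coe_inj]

lemma apply_inter_add_apply_diff (μ : ProbabilityMeasure X) (A : Set X) {B : Set X}
    (hB : MeasurableSet B) : μ (A ∩ B) + μ (A \ B) = μ A := by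
  simp only [← ENNReal.coe_inj, ENNReal.coe_add,
    ProbabilityMeasure.ennreal_coeFn_eq_coeFn_toMeasure, measure_inter_add_sdiff A hB]

lemma measurable_boolIndicator {A : Set X} (hA : MeasurableSet A) : Measurable A.boolIndicator :=
  measurable_to_bool (by rwa [preimage_boolIndicator_true])

lemma identDistrib_prodMk_boolIndicator [Countable ι] [MeasurableSingletonClass ι]
    {μ : Measure X} {ν : Measure Y} [IsFiniteMeasure μ] {a : X → ι} {b : Y → ι}
    (hab : IdentDistrib a b μ ν) {C : Set X} {D : Set Y} (hC : MeasurableSet C)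
    (hD : MeasurableSet D) (hCD : ∀ i, μ (a ⁻¹' {i} ∩ C) = ν (b ⁻¹' {i} ∩ D)) :
    IdentDistrib (fun x ↦ (a x, C.boolIndicator x)) (fun y ↦ (b y, D.boolIndicator y)) μ ν := by
  have ha := hab.aemeasurable_fst.prodMk (measurable_boolIndicator hC).aemeasurable
  have hb := hab.aemeasurable_snd.prodMk (measurable_boolIndicator hD).aemeasurable
  have hdiff (i : ι) : μ (a ⁻¹' {i} \ C) = ν (b ⁻¹' {i} \ D) := by
    have hfin : μ (a ⁻¹' {i} ∩ C) ≠ ⊤ := measure_ne_top _ _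
    refine (ENNReal.add_right_inj hfin).1 ?_
    rw [measure_inter_add_sdiff _ hC, hCD, measure_inter_add_sdiff _ hD]
    exact hab.measure_mem_eq (measurableSet_singleton i)
  refine ⟨ha, hb, Measure.ext_of_singleton fun ⟨i, t⟩ ↦ ?_⟩
  rw [Measure.map_apply_of_aemeasurable ha (measurableSet_singleton _),
    Measure.map_apply_of_aemeasurable hb (measurableSet_singleton _),
    ← singleton_prod_singleton, mk_preimage_prod, mk_preimage_prod]
  cases t
  · simpa only [preimage_boolIndicator_false, sdiff_eq] using hdiff i
  · simpa only [preimage_boolIndicator_true] using hCD i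

end Measure

section Embedding

variable {X Y Z : Type*} [TopologicalSpace X] [TopologicalSpace Z]

lemma exists_homeomorph_of_range_eq [TopologicalSpace Y] {f : X → Z} {g : Y → Z}
    (hf : IsEmbedding f) (hg : IsEmbedding g) (h : range f = range g) :
    ∃ e : X ≃ₜ Y, g ∘ e = f := by
  refine ⟨(hf.toHomeomorph.trans (.setCongr h)).trans hg.toHomeomorph.symm, funext fun x ↦ ?_⟩
  exact congrArg Subtype.val (hg.toHomeomorph.apply_symm_apply _)

variable [MeasurableSpace X] [MeasurableSpace Y] [MeasurableSpace Z]

lemma range_subset_of_identDistrib [OpensMeasurableSpace Z] {f : X → Z} {g : Y → Z}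
    {μ : Measure X} {ν : Measure Y} [μ.IsOpenPosMeasure] (hf : Continuous f)
    (hg : IsClosed (range g)) (h : IdentDistrib f g μ ν) : range f ⊆ range g := by
  have hnull : μ (f ⁻¹' (range g)ᶜ) = 0 := by
    rw [h.measure_mem_eq hg.isOpen_compl.measurableSet, preimage_compl, preimage_range,
      compl_univ, measure_empty]
  have hempty := (hg.isOpen_compl.preimage hf).measure_eq_zero_iff μ |>.1 hnull
  rwa [preimage_eq_empty_iff, disjoint_compl_left_iff_subset] at hempty

end Embedding

lemma FullSupport.isOpenPosMeasure {X : Type*} [TopologicalSpace X] [MeasurableSpace X]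
    {μ : ProbabilityMeasure X} (h : FullSupport μ) : (μ : Measure X).IsOpenPosMeasure :=
  ⟨fun U hU hne hzero ↦ (h U hU hne).ne' ((μ.null_iff_toMeasure_null U).2 hzero)⟩

lemma exists_preservesAll_comp_eq {X Y : Type*} [TopologicalSpace X] [TopologicalSpace Y]
    [MeasurableSpace X] [BorelSpace X] [MeasurableSpace Y] [BorelSpace Y]
    {K : Set (ProbabilityMeasure X)} (hne : K.Nonempty) (hsupp : ∀ μ ∈ K, FullSupport μ)
    {f g : X → Y} (hf : IsClosedEmbedding f) (hg : IsClosedEmbedding g)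
    (h : ∀ μ ∈ K, IdentDistrib f g (μ : Measure X) (μ : Measure X)) :
    ∃ e : X ≃ₜ X, PreservesAll K e ∧ g ∘ e = f := by
  obtain ⟨μ₀, hμ₀⟩ := hne
  have := (hsupp μ₀ hμ₀).isOpenPosMeasure
  have hrange : range f = range g :=
    (range_subset_of_identDistrib hf.continuous hg.isClosed_range (h μ₀ hμ₀)).antisymm
      (range_subset_of_identDistrib hg.continuous hf.isClosed_range (h μ₀ hμ₀).symm)
  obtain ⟨e, he⟩ := exists_homeomorph_of_range_eq hf.isEmbedding hg.isEmbedding hrange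
  refine ⟨e, fun μ hμ ↦ hg.measurableEmbedding.map_injective ?_, he⟩
  calc ((μ : Measure X).map e).map g
      = (μ : Measure X).map f := by
        rw [Measure.map_map hg.measurable e.continuous.measurable, he]
    _ = (μ : Measure X).map g := (h μ hμ).map_eq

section ClopenCode

variable {X ι : Type*} [TopologicalSpace X]

/-- The coding of the points of `X` by a family of clopen sets: the `i`-th binary digit of the
code of `x` records whether `x` lies in `c i`. -/
noncomputable def clopenCode (c : ι → Clopens X) (x : X) (i : ι) : Bool :=
  (c i : Set X).boolIndicator x

lemma continuous_clopenCode (c : ι → Clopens X) : Continuous (clopenCode c) :=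
  continuous_pi fun i ↦ (continuous_boolIndicator_iff_isClopen _).2 (c i).isClopen

lemma measurable_clopenCode [MeasurableSpace X] [OpensMeasurableSpace X] (c : ι → Clopens X) :
    Measurable (clopenCode c) :=
  measurable_pi_lambda _ fun i ↦ measurable_boolIndicator (c i).isClopen.isOpen.measurableSet

lemma isClosedEmbedding_clopenCode [CompactSpace X] [TotallySeparatedSpace X]
    {c : ι → Clopens X} (hc : Function.Surjective c) : IsClosedEmbedding (clopenCode c) := by
  refine (continuous_clopenCode c).isClosedEmbedding fun x y hxy ↦ ?_
  by_contra hne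
  obtain ⟨C, hC, hx, hy⟩ := exists_isClopen_of_totally_separated hne
  obtain ⟨i, hi⟩ := hc ⟨C, hC⟩
  have hcode : C.boolIndicator x = C.boolIndicator y := by
    simpa only [clopenCode, hi, Clopens.coe_mk] using congrFun hxy i
  exact hy ((mem_iff_boolIndicator C y).2 (hcode ▸ (mem_iff_boolIndicator C x).1 hx))

end ClopenCode

section Matching

variable {X : Type*} [TopologicalSpace X] [MeasurableSpace X]
  {K : Set (ProbabilityMeasure X)} {R S : Set (Clopens X × Clopens X)}

/-- A `K`-matching: a set of pairs of clopen sets such that every Boolean combination of the first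
components is `K`-equivalent to the same combination of the second components. These are the
partial isomorphisms of the back-and-forth argument; the condition is encoded by saying that the
codings of `X` by the first and by the second components have the same law under every `μ ∈ K`. -/
def IsMatching (K : Set (ProbabilityMeasure X)) (R : Set (Clopens X × Clopens X)) : Prop :=
  ∀ μ ∈ K, IdentDistrib (clopenCode fun p : R ↦ p.1.1) (clopenCode fun p : R ↦ p.1.2)
    (μ : Measure X) (μ : Measure X)

lemma IsMatching.mono (hS : IsMatching K S) (hRS : R ⊆ S) : IsMatching K R := fun μ hμ ↦
  (hS μ hμ).comp (u := domRestrict₂ (π := fun _ ↦ Bool) hRS) (measurable_restrict₂ hRS)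

lemma isMatching_empty : IsMatching K ∅ := fun μ _ ↦ by
  rw [Subsingleton.elim (clopenCode fun p : (∅ : Set (Clopens X × Clopens X)) ↦ p.1.2)]
  exact .refl (by fun_prop)

lemma IsMatching.insert {C D : Clopens X}
    (h : ∀ μ ∈ K, IdentDistrib
      (fun x ↦ (clopenCode (fun p : R ↦ p.1.1) x, (C : Set X).boolIndicator x))
      (fun x ↦ (clopenCode (fun p : R ↦ p.1.2) x, (D : Set X).boolIndicator x))
      (μ : Measure X) (μ : Measure X)) :
    IsMatching K (insert (C, D) R) := fun μ hμ ↦ by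
  classical
  let glue (v : (R → Bool) × Bool) (p : ↥(Insert.insert (C, D) R)) : Bool :=
    if hp : p.1 ∈ R then v.1 ⟨p, hp⟩ else v.2
  have hglue : Measurable glue := measurable_pi_lambda _ fun p ↦ by
    by_cases hp : p.1 ∈ R <;> simp only [glue, hp, dite_true, dite_false] <;> fun_prop
  convert (h μ hμ).comp hglue using 1
  all_goals
    ext x p
    by_cases hp : p.1 ∈ R
    · simp [glue, clopenCode, hp]
    · simp [glue, clopenCode, p.2.resolve_right hp]

variable [OpensMeasurableSpace X]

lemma isMatching_of_finite (h : ∀ F ⊆ R, F.Finite → IsMatching K F) : IsMatching K R := by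
  intro μ hμ
  refine (identDistrib_iff_forall_finset_identDistrib (measurable_clopenCode _).aemeasurable
    (measurable_clopenCode _).aemeasurable).2 fun I ↦ ?_
  have hI := h (Subtype.val '' (I : Set R)) (Subtype.coe_image_subset _ _)
    (I.finite_toSet.image _) μ hμ
  exact hI.comp (u := fun v (i : I) ↦ v ⟨i.1, mem_image_of_mem _ i.2⟩) (by fun_prop)

lemma isMatching_singleton {U V : Clopens X} (hUV : ∀ μ ∈ K, μ U = μ V) :
    IsMatching K {(U, V)} := by
  rw [← insert_empty_eq]
  refine IsMatching.insert fun μ hμ ↦ identDistrib_prodMk_boolIndicator (isMatching_empty μ hμ)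
    U.isClopen.isOpen.measurableSet V.isClopen.isOpen.measurableSet fun v ↦ ?_
  have huniv (f : X → (∅ : Set (Clopens X × Clopens X)) → Bool) : f ⁻¹' {v} = univ :=
    eq_univ_of_forall fun x ↦ Subsingleton.elim _ _
  rw [huniv, huniv, univ_inter, univ_inter, coe_measure_eq_iff, hUV μ hμ]

-- Goodness needs a strict inequality; full support provides it unless `P ⊆ C`.
lemma exists_isClopen_subset_measure_eq_inter (hgood : Good K) (hsupp : ∀ μ ∈ K, FullSupport μ)
    {P Q C : Set X} (hP : IsClopen P) (hQ : IsClopen Q) (hC : IsClopen C)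
    (hPQ : ∀ μ ∈ K, μ P = μ Q) :
    ∃ D, IsClopen D ∧ D ⊆ Q ∧ ∀ μ ∈ K, μ D = μ (P ∩ C) := by
  by_cases hPC : P ⊆ C
  · exact ⟨Q, hQ, subset_rfl, fun μ hμ ↦ by rw [inter_eq_left.2 hPC, hPQ μ hμ]⟩
  · refine hgood _ _ (hP.inter hC) hQ fun μ hμ ↦ ?_
    have hpos : 0 < μ (P \ C) := hsupp μ hμ _ (hP.diff hC).isOpen (sdiff_nonempty.2 hPC)
    rw [← hPQ μ hμ, ← apply_inter_add_apply_diff μ P hC.isOpen.measurableSet]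
    exact lt_add_of_pos_right _ hpos

lemma exists_clopens_identDistrib_prodMk (hgood : Good K) (hsupp : ∀ μ ∈ K, FullSupport μ)
    {Y : Type*} [Finite Y] [TopologicalSpace Y] [DiscreteTopology Y] [MeasurableSpace Y]
    [MeasurableSingletonClass Y] {a b : X → Y} (ha : Continuous a) (hb : Continuous b)
    (hab : ∀ μ ∈ K, IdentDistrib a b (μ : Measure X) (μ : Measure X)) (C : Clopens X) :
    ∃ D : Clopens X, ∀ μ ∈ K, IdentDistrib (fun x ↦ (a x, (C : Set X).boolIndicator x))
      (fun x ↦ (b x, (D : Set X).boolIndicator x)) (μ : Measure X) (μ : Measure X) := by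
  choose D hD hDb hDμ using fun i ↦ exists_isClopen_subset_measure_eq_inter hgood hsupp
    ((isClopen_discrete {i}).preimage ha) ((isClopen_discrete {i}).preimage hb) C.isClopen
    fun μ hμ ↦ coe_measure_eq_iff.1 ((hab μ hμ).measure_mem_eq (measurableSet_singleton i))
  have hunion : IsClopen (⋃ i, D i) := isClopen_iUnion_of_finite hD
  have hinter (i : Y) : b ⁻¹' {i} ∩ ⋃ j, D j = D i := by
    refine Subset.antisymm ?_ (subset_inter (hDb i) (subset_iUnion D i))
    rintro y ⟨hyi, hy⟩
    obtain ⟨j, hj⟩ := mem_iUnion.1 hy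
    obtain rfl : j = i := (hDb j hj).symm.trans hyi
    exact hj
  refine ⟨⟨⋃ i, D i, hunion⟩, fun μ hμ ↦ identDistrib_prodMk_boolIndicator (hab μ hμ)
    C.isClopen.isOpen.measurableSet hunion.isOpen.measurableSet fun i ↦ ?_⟩
  change (μ : Measure X) (a ⁻¹' {i} ∩ C) = (μ : Measure X) (b ⁻¹' {i} ∩ ⋃ j, D j)
  rw [hinter, coe_measure_eq_iff, hDμ i μ hμ]

lemma IsMatching.exists_insert_left (hgood : Good K) (hsupp : ∀ μ ∈ K, FullSupport μ)
    (hR : IsMatching K R) (hfin : R.Finite) (C : Clopens X) :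
    ∃ D, IsMatching K (Insert.insert (C, D) R) := by
  have := hfin.to_subtype
  obtain ⟨D, hD⟩ := exists_clopens_identDistrib_prodMk hgood hsupp (continuous_clopenCode _)
    (continuous_clopenCode _) hR C
  exact ⟨D, .insert hD⟩

lemma IsMatching.exists_insert_right (hgood : Good K) (hsupp : ∀ μ ∈ K, FullSupport μ)
    (hR : IsMatching K R) (hfin : R.Finite) (D : Clopens X) :
    ∃ C, IsMatching K (Insert.insert (C, D) R) := by
  have := hfin.to_subtype
  obtain ⟨C, hC⟩ := exists_clopens_identDistrib_prodMk hgood hsupp (continuous_clopenCode _)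
    (continuous_clopenCode _) (fun μ hμ ↦ (hR μ hμ).symm) D
  exact ⟨C, .insert fun μ hμ ↦ (hC μ hμ).symm⟩

lemma exists_isMatching_total [Countable (Clopens X)] (hgood : Good K)
    (hsupp : ∀ μ ∈ K, FullSupport μ) {U V : Clopens X} (hUV : ∀ μ ∈ K, μ U = μ V) :
    ∃ R, IsMatching K R ∧ (U, V) ∈ R ∧ (∀ C, ∃ D, (C, D) ∈ R) ∧ ∀ D, ∃ C, (C, D) ∈ R := by
  let P := {F : Set (Clopens X × Clopens X) // F.Finite ∧ IsMatching K F}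
  let start : P := ⟨{(U, V)}, finite_singleton _, isMatching_singleton hUV⟩
  let forth (C : Clopens X) : Order.Cofinal P := ⟨{F | ∃ D, (C, D) ∈ F.1}, fun F ↦ by
    obtain ⟨D, hD⟩ := F.2.2.exists_insert_left hgood hsupp F.2.1 C
    exact ⟨⟨_, F.2.1.insert _, hD⟩, ⟨D, mem_insert _ _⟩, subset_insert _ _⟩⟩
  let back (D : Clopens X) : Order.Cofinal P := ⟨{F | ∃ C, (C, D) ∈ F.1}, fun F ↦ by
    obtain ⟨C, hC⟩ := F.2.2.exists_insert_right hgood hsupp F.2.1 D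
    exact ⟨⟨_, F.2.1.insert _, hC⟩, ⟨C, mem_insert _ _⟩, subset_insert _ _⟩⟩
  have := Encodable.ofCountable (Clopens X ⊕ Clopens X)
  let I := Order.idealOfCofinals start (Sum.elim forth back)
  have hmeets := Order.cofinal_meets_idealOfCofinals start (Sum.elim forth back)
  have hmem {F : P} (hF : F ∈ I) : F.1 ⊆ ⋃ G ∈ I, G.1 :=
    subset_biUnion_of_mem (u := Subtype.val) hF
  refine ⟨⋃ F ∈ I, F.1, isMatching_of_finite fun F hF hfin ↦ ?_,
    hmem (Order.mem_idealOfCofinals _ _) rfl, fun C ↦ ?_, fun D ↦ ?_⟩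
  · lift F to Finset (Clopens X × Clopens X) using hfin
    obtain ⟨G, -, hFG⟩ := DirectedOn.exists_mem_subset_of_finset_subset_biUnion I.nonempty
      I.directed hF
    exact G.2.2.mono hFG
  · obtain ⟨F, ⟨D, hD⟩, hF⟩ := hmeets (.inl C)
    exact ⟨D, hmem hF hD⟩
  · obtain ⟨F, ⟨C, hC⟩, hF⟩ := hmeets (.inr D)
    exact ⟨C, hmem hF hC⟩

end Matching

section Homogeneity

variable {X : Type*} [TopologicalSpace X] [CompactSpace X] [MetrizableSpace X]
  [TotallyDisconnectedSpace X] [MeasurableSpace X] [BorelSpace X]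
  {K : Set (ProbabilityMeasure X)}

lemma exists_preservesAll_preimage_eq (hne : K.Nonempty) (hgood : Good K)
    (hsupp : ∀ μ ∈ K, FullSupport μ) {U V : Set X} (hU : IsClopen U) (hV : IsClopen V)
    (hUV : ∀ μ ∈ K, μ U = μ V) : ∃ h : X ≃ₜ X, PreservesAll K h ∧ h ⁻¹' V = U := by
  have : Countable (Clopens X) := Clopens.countable_iff_secondCountable.2 inferInstance
  obtain ⟨R, hR, hUVR, hleft, hright⟩ := exists_isMatching_total hgood hsupp
    (U := ⟨U, hU⟩) (V := ⟨V, hV⟩) hUV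
  obtain ⟨h, hK, hcode⟩ := exists_preservesAll_comp_eq hne hsupp
    (isClosedEmbedding_clopenCode fun C ↦ (hleft C).elim fun D hD ↦ ⟨⟨(C, D), hD⟩, rfl⟩)
    (isClosedEmbedding_clopenCode fun D ↦ (hright D).elim fun C hC ↦ ⟨⟨(C, D), hC⟩, rfl⟩) hR
  refine ⟨h, hK, ext fun x ↦ ?_⟩
  have hx : V.boolIndicator (h x) = U.boolIndicator x :=
    congrFun (congrFun hcode x) ⟨_, hUVR⟩
  rw [mem_preimage, mem_iff_boolIndicator, hx, mem_iff_boolIndicator]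

lemma measure_eq_of_invariant (hne : K.Nonempty) (hgood : Good K)
    (hsupp : ∀ μ ∈ K, FullSupport μ) {ν : ProbabilityMeasure X}
    (hν : ∀ h : X ≃ₜ X, PreservesAll K h → Preserves h ν) {U V : Set X} (hU : IsClopen U)
    (hV : IsClopen V) (hUV : ∀ μ ∈ K, μ U = μ V) : ν U = ν V := by
  obtain ⟨h, hK, rfl⟩ := exists_preservesAll_preimage_eq hne hgood hsupp hU hV hUV
  have hpres : MeasurePreserving h (ν : Measure X) (ν : Measure X) := ⟨h.measurable, hν h hK⟩
  exact coe_measure_eq_iff.1 (hpres.measure_preimage hV.isOpen.measurableSet.nullMeasurableSet)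

end Homogeneity

end DynSimplex

open DynSimplex in
theorem G_invariant_measure_le_of_lt_inv_general {X : Type*} [TopologicalSpace X] [CompactSpace X]
    [MetrizableSpace X] [TotallyDisconnectedSpace X] [MeasurableSpace X] [BorelSpace X]
    {K : Set (ProbabilityMeasure X)} (hne : K.Nonempty) (hgood : Good K)
    (hsupp : ∀ μ ∈ K, FullSupport μ) {ν : ProbabilityMeasure X}
    (hν : ∀ h : X ≃ₜ X, PreservesAll K h → Preserves h ν) {A B : Set X} (hA : IsClopen A)
    (hB : IsClopen B) {n : ℕ} (hlt : ∀ μ ∈ K, n * μ A < μ B) : n * ν A ≤ ν B := by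
  induction n generalizing B with
  | zero => simp
  | succ n ih =>
    simp only [Nat.cast_succ, add_one_mul] at hlt ⊢
    obtain ⟨C, hC, hCB, hCA⟩ := hgood A B hA hB fun μ hμ ↦ le_add_self.trans_lt (hlt μ hμ)
    have hsplit (μ : ProbabilityMeasure X) : μ B = μ (B \ C) + μ C := by
      rw [← apply_inter_add_apply_diff μ B hC.isOpen.measurableSet, inter_eq_right.2 hCB, add_comm]
    have hdiff : n * ν A ≤ ν (B \ C) := ih (hB.diff hC) fun μ hμ ↦ by
      simpa only [hsplit, hCA μ hμ, add_lt_add_iff_right] using hlt μ hμ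
    calc n * ν A + ν A
        = n * ν A + ν C := by rw [measure_eq_of_invariant hne hgood hsupp hν hC hA hCA]
      _ ≤ ν (B \ C) + ν C := by gcongr
      _ = ν B := (hsplit ν).symm

theorem G_invariant_measure_le_of_lt_inv
    {X : Type*} [TopologicalSpace X] [CompactSpace X]
    [TopologicalSpace.MetrizableSpace X] [TotallyDisconnectedSpace X] [PerfectSpace X]
    [Nonempty X] [MeasurableSpace X] [BorelSpace X]
    (K : Set (MeasureTheory.ProbabilityMeasure X)) (hne : K.Nonempty)
    (hgood : DynSimplex.Good K) (hsupp : ∀ μ ∈ K, DynSimplex.FullSupport μ)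
    (ν : MeasureTheory.ProbabilityMeasure X)
    (hν : ∀ h : X ≃ₜ X, DynSimplex.PreservesAll K h → DynSimplex.Preserves h ν)
    (A : Set X) (hA : IsClopen A) (n : ℕ) (hn : 1 ≤ n)
    (hlt : ∀ μ ∈ K, (μ A : ℝ) < 1 / (n : ℝ)) :
    (ν A : ℝ) ≤ 1 / (n : ℝ) := by
  have hn' : (0 : ℝ) < n := Nat.cast_pos.2 hn
  have h : n * ν A ≤ ν Set.univ :=
    G_invariant_measure_le_of_lt_inv_general hne hgood hsupp hν hA isClopen_univ fun μ hμ ↦ by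
      simpa [← NNReal.coe_lt_coe] using (lt_div_iff₀' hn').1 (hlt μ hμ)
  rw [le_div_iff₀' hn']
  simpa [← NNReal.coe_le_coe] using h
end
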